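/- Let (G_n)_{n≥1} be a sequence of finite connected regular simple graphs with growth rates γ(G_n), such that the common degree Δ(G_n) tends to infinity as n → ∞ and every G_n has girth at least 5. Then liminf_{n→∞} γ(G_n)/Δ(G_n) ≥ (2e−1)/(e−1)², where e is Euler's number. (Proposition on regular graphs of girth ≥ 5; numerically (2e−1)/(e−1)² ≈ 1.506.) -/

import Mathlib

open MeasureTheory Filter Topology
open scoped ENNReal Classical

/-- The ballistic deposition height process on a graph `G`, started from `h0`,
driven by the sequence of chosen vertices `X`. -/
noncomputable def heightProcess {V : Type*} [Fintype V] (G : SimpleGraph V)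
    (h0 : V → ℕ) (X : ℕ → V) : ℕ → V → ℕ
  | 0 => h0
  | n + 1 => fun x =>
      if x = X n then
        1 + Finset.univ.sup (fun y =>
          if y = x ∨ G.Adj x y then heightProcess G h0 X n y else 0)
      else heightProcess G h0 X n x

/-- `X` is an i.i.d. sequence of uniformly distributed `V`-valued random variables on `(Ω, μ)`:
every finite cylinder event has the product-of-uniform probabilities. -/
def IsUniformIID {V : Type*} [Fintype V] {Ω : Type*} [MeasurableSpace Ω]
    (μ : Measure Ω) (X : ℕ → Ω → V) : Prop :=
  (∀ (n : ℕ) (v : V), MeasurableSet {ω | X n ω = v}) ∧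
  (∀ (n : ℕ) (f : ℕ → V), μ {ω | ∀ k < n, X k ω = f k} = (Fintype.card V : ℝ≥0∞)⁻¹ ^ n)

/-- `γ` is the growth rate of `G`: `γ > 0` and, for any i.i.d. uniform driving sequence,
almost surely `(#V/n) · max_x H_{x,n} → γ` and `(#V/n) · min_x H_{x,n} → γ`. -/
def IsGrowthRate {V : Type*} [Fintype V] (G : SimpleGraph V) (γ : ℝ) : Prop :=
  0 < γ ∧
  ∀ {Ω : Type} [MeasurableSpace Ω] (μ : Measure Ω) [IsProbabilityMeasure μ]
    (X : ℕ → Ω → V), IsUniformIID μ X →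
    (∀ᵐ ω ∂μ, Tendsto (fun n : ℕ =>
        (Fintype.card V : ℝ) *
          (⨆ x : V, (heightProcess G (fun _ => 0) (fun k => X k ω) n x : ℝ)) / n)
      atTop (𝓝 γ)) ∧
    (∀ᵐ ω ∂μ, Tendsto (fun n : ℕ =>
        (Fintype.card V : ℝ) *
          (⨅ x : V, (heightProcess G (fun _ => 0) (fun k => X k ω) n x : ℝ)) / n)
      atTop (𝓝 γ))



/-- One step of the deposition dynamics. -/
noncomputable def bdStep {V : Type*} [Fintype V] (G : SimpleGraph V) (H : V → ℕ) (v : V) : V → ℕ :=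
  fun x => if x = v then
      1 + Finset.univ.sup (fun y => if y = x ∨ G.Adj x y then H y else 0)
    else H x

lemma heightProcess_succ {V : Type*} [Fintype V] (G : SimpleGraph V) (h0 : V → ℕ) (X : ℕ → V)
    (n : ℕ) : heightProcess G h0 X (n + 1) = bdStep G (heightProcess G h0 X n) (X n) := rfl

lemma heightProcess_congr {V : Type*} [Fintype V] (G : SimpleGraph V) (h0 : V → ℕ) (X Y : ℕ → V)
    (n : ℕ) (h : ∀ k < n, X k = Y k) : heightProcess G h0 X n = heightProcess G h0 Y n := by
  induction n with
  | zero => rfl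
  | succ n ih =>
    rw [heightProcess_succ, heightProcess_succ, ih (fun k hk => h k (by omega)), h n (by omega)]

lemma le_bdStep_self {V : Type*} [Fintype V] (G : SimpleGraph V) (H : V → ℕ) (v a : V)
    (h : a = v ∨ G.Adj v a) : H a + 1 ≤ bdStep G H v v := by
  have := Finset.le_sup (f := fun y => if y = v ∨ G.Adj v y then H y else 0) (Finset.mem_univ a)
  simp only [h, if_true] at this
  simp only [bdStep, if_true]
  omega

lemma le_bdStep {V : Type*} [Fintype V] (G : SimpleGraph V) (H : V → ℕ) (v a : V) :
    H a ≤ bdStep G H v a := by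
  by_cases h : a = v
  · subst h
    have := le_bdStep_self G H a a (Or.inl rfl)
    omega
  · simp [bdStep, h]

/-- The potential table (in units of 1/50 of a height). -/
def phiT : ℕ → ℕ → ℕ
  | 1, 1 => 50
  | 2, 0 => 51
  | 2, 1 => 79
  | 2, 2 => 101
  | 3, 0 => 69
  | 3, 1 => 91
  | 3, 2 => 108
  | 3, 3 => 119
  | 4, 0 => 76
  | 4, 1 => 96
  | 4, 2 => 111
  | 4, 3 => 121
  | 4, 4 => 126
  | _, _ => 0

lemma phiT_le (m k : ℕ) : phiT m k ≤ 126 := by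
  unfold phiT; split <;> omega

lemma phiT_spec (m k : ℕ) (hm : 1 ≤ m) (hm4 : m ≤ 4) (hk : k ≤ m) :
    ∃ g1 g2 : ℕ, g2 ≤ g1 ∧ g1 ≤ 300 ∧
      phiT m k + g2 ≤ phiT (min (m + 1) 4) (min (k + 1) 4) ∧
      (phiT m k + g1 ≤ 50 + phiT (min (k + 1) 4) 1 ∨
        phiT m k + g1 ≤ phiT (min (m + 1) 4) (min (k + 1) 4)) ∧
      78 ≤ g2 * m + (g1 - g2) * k := by
  refine ⟨max (50 + phiT (min (k + 1) 4) 1) (phiT (min (m + 1) 4) (min (k + 1) 4)) - phiT m k,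
    phiT (min (m + 1) 4) (min (k + 1) 4) - phiT m k, ?_⟩
  interval_cases m <;> interval_cases k <;> decide

/-- `r` is a value of the potential realised by the height profile `H`. -/
def Realised {V : Type*} (H : V → ℕ) (r : ℕ) : Prop :=
  ∃ (h m k : ℕ) (A B : Finset V), r = 50 * h + phiT m k ∧ 1 ≤ m ∧ m ≤ 4 ∧ k ≤ m ∧
    A.card = m ∧ B.card = k ∧ (∀ a ∈ A, h ≤ H a) ∧ (∀ b ∈ B, h + 1 ≤ H b)

/-- The potential. -/
noncomputable def potF {V : Type*} (H : V → ℕ) : ℕ := sSup {r | Realised H r}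

lemma realised_bound {V : Type*} (H : V → ℕ) (M : ℕ) (hM : ∀ x, H x ≤ M) {r : ℕ}
    (hr : Realised H r) : r ≤ 50 * M + 126 := by
  obtain ⟨h, m, k, A, B, rfl, h1, h4, hk, hA, hB, hAh, hBh⟩ := hr
  have : A.Nonempty := Finset.card_pos.mp (by omega)
  obtain ⟨a, ha⟩ := this
  have := hAh a ha
  have := hM a
  have := phiT_le m k
  omega

lemma exists_bound {V : Type*} [Fintype V] (H : V → ℕ) : ∃ M, ∀ x, H x ≤ M :=
  ⟨Finset.univ.sup H, fun x => Finset.le_sup (Finset.mem_univ x)⟩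

lemma realised_bdd {V : Type*} [Fintype V] (H : V → ℕ) : BddAbove {r | Realised H r} := by
  obtain ⟨M, hM⟩ := exists_bound H
  exact ⟨50 * M + 126, fun r hr => realised_bound H M hM hr⟩

lemma realised_potF {V : Type*} [Fintype V] [Nonempty V] (H : V → ℕ) : Realised H (potF H) := by
  refine Nat.sSup_mem (s := {r | Realised H r}) ?_ (realised_bdd H)
  obtain ⟨v⟩ := ‹Nonempty V›
  exact ⟨_, 0, 1, 0, {v}, ∅, rfl, by simp⟩

lemma le_potF {V : Type*} [Fintype V] (H : V → ℕ) {r : ℕ} (hr : Realised H r) : r ≤ potF H :=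
  le_csSup (realised_bdd H) hr

lemma potF_mono {V : Type*} [Fintype V] [Nonempty V] (H H' : V → ℕ) (h : ∀ x, H x ≤ H' x) :
    potF H ≤ potF H' := by
  apply le_potF
  obtain ⟨h, m, k, A, B, e, h1, h4, hk, hA, hB, hAh, hBh⟩ := realised_potF H
  exact ⟨h, m, k, A, B, e, h1, h4, hk, hA, hB, fun a ha => (hAh a ha).trans (by solve_by_elim),
    fun a ha => (hBh a ha).trans (by solve_by_elim)⟩

lemma capped_insert {V : Type*} (A : Finset V) (v : V) (hv : v ∉ A) (hA : A.card ≤ 4) :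
    ∃ A' : Finset V, A'.card = min (A.card + 1) 4 ∧ ∀ a ∈ A', a = v ∨ a ∈ A := by
  rcases Nat.lt_or_ge A.card 4 with h | h
  · refine ⟨insert v A, ?_, ?_⟩
    · rw [Finset.card_insert_of_notMem hv]; omega
    · intro a ha; simpa using ha
  · exact ⟨A, by omega, fun a ha => Or.inr ha⟩

/-- Neighbourhood of a finite set. -/
noncomputable def nbhd {V : Type*} [Fintype V] (G : SimpleGraph V) (A : Finset V) : Finset V :=
  Finset.univ.filter (fun v => ∃ a ∈ A, G.Adj v a)

lemma nbhd_card {V : Type*} [Fintype V] (G : SimpleGraph V) (d : ℕ)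
    (hreg : ∀ a, (Finset.univ.filter (fun v => G.Adj v a)).card = d)
    (hco : ∀ a b, a ≠ b → (Finset.univ.filter (fun v => G.Adj v a ∧ G.Adj v b)).card ≤ 1)
    (A : Finset V) : A.card * d ≤ (nbhd G A).card + A.card * A.card := by
  induction A using Finset.induction_on with
  | empty => simp
  | insert a A ha ih =>
    rw [Finset.card_insert_of_notMem ha]
    have e : nbhd G (insert a A) = Finset.univ.filter (fun v => G.Adj v a) ∪ nbhd G A := by
      ext v; simp [nbhd]
    have h1 := Finset.card_union_add_card_inter (Finset.univ.filter (fun v => G.Adj v a)) (nbhd G A)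
    have h2 : (Finset.univ.filter (fun v => G.Adj v a) ∩ nbhd G A).card ≤ A.card := by
      have hs : Finset.univ.filter (fun v => G.Adj v a) ∩ nbhd G A ⊆
          A.biUnion (fun b => Finset.univ.filter (fun v => G.Adj v a ∧ G.Adj v b)) := by
        intro v hv
        simp only [nbhd, Finset.mem_inter, Finset.mem_filter, Finset.mem_univ, true_and,
          Finset.mem_biUnion] at hv ⊢
        obtain ⟨h, b, hb, hvb⟩ := hv
        exact ⟨b, hb, h, hvb⟩
      refine (Finset.card_le_card hs).trans ?_
      have := Finset.card_biUnion_le_card_mul A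
        (fun b => Finset.univ.filter (fun v => G.Adj v a ∧ G.Adj v b)) 1
        (fun b hb => hco a b (by rintro rfl; exact ha hb))
      simpa using this
    rw [hreg a, ← e] at h1
    nlinarith

lemma potF_step {V : Type*} [Fintype V] [Nonempty V] (G : SimpleGraph V) (d : ℕ)
    (hreg : ∀ a, (Finset.univ.filter (fun v => G.Adj v a)).card = d)
    (hco : ∀ a b, a ≠ b → (Finset.univ.filter (fun v => G.Adj v a ∧ G.Adj v b)).card ≤ 1)
    (H : V → ℕ) :
    Fintype.card V * potF H + 78 * d ≤ (∑ v, potF (bdStep G H v)) + 7200 := by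
  obtain ⟨h, m, k, A, B, e, h1, h4, hk, hA, hB, hAh, hBh⟩ := realised_potF H
  obtain ⟨g1, g2, hg, hg1, hup, hsh, h78⟩ := phiT_spec m k h1 h4 hk
  -- cardinality bounds
  have cA : m * d ≤ (nbhd G A \ (A ∪ B)).card + 24 := by
    have := nbhd_card G d hreg hco A
    have h2 := Finset.le_card_sdiff (A ∪ B) (nbhd G A)
    have h3 := Finset.card_union_le A B
    rw [hA] at this
    have : m * m ≤ 16 := by nlinarith
    omega
  have cB : k * d ≤ (nbhd G B \ (A ∪ B)).card + 24 := by
    have := nbhd_card G d hreg hco B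
    have h2 := Finset.le_card_sdiff (A ∪ B) (nbhd G B)
    have h3 := Finset.card_union_le A B
    rw [hB] at this
    have : k * k ≤ 16 := by nlinarith
    omega
  -- pointwise gain
  have up : ∀ v, v ∉ A ∪ B → (v ∈ nbhd G A ∨ v ∈ nbhd G B) →
      50 * h + phiT (min (m + 1) 4) (min (k + 1) 4) ≤ potF (bdStep G H v) := by
    intro v hv hvn
    rw [Finset.notMem_union] at hv
    have hvh : h + 1 ≤ bdStep G H v v := by
      rcases hvn with hvn | hvn <;>
        simp only [nbhd, Finset.mem_filter, Finset.mem_univ, true_and] at hvn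
      · obtain ⟨a, ha, hva⟩ := hvn
        have := le_bdStep_self G H v a (Or.inr hva)
        have := hAh a ha
        omega
      · obtain ⟨a, ha, hva⟩ := hvn
        have := le_bdStep_self G H v a (Or.inr hva)
        have := hBh a ha
        omega
    obtain ⟨A', cA', hA'⟩ := capped_insert A v hv.1 (by omega)
    obtain ⟨B', cB', hB'⟩ := capped_insert B v hv.2 (by omega)
    apply le_potF
    refine ⟨h, _, _, A', B', rfl, by omega, by omega, by omega, by omega, by omega, ?_, ?_⟩
    · intro a ha
      rcases hA' a ha with rfl | ha
      · omega
      · exact (hAh a ha).trans (le_bdStep G H v a)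
    · intro a ha
      rcases hB' a ha with rfl | ha
      · omega
      · exact (hBh a ha).trans (le_bdStep G H v a)
  have sh : ∀ v, v ∉ A ∪ B → v ∈ nbhd G B →
      50 * (h + 1) + phiT (min (k + 1) 4) 1 ≤ potF (bdStep G H v) := by
    intro v hv hvn
    rw [Finset.notMem_union] at hv
    have hvh : h + 1 + 1 ≤ bdStep G H v v := by
      simp only [nbhd, Finset.mem_filter, Finset.mem_univ, true_and] at hvn
      obtain ⟨a, ha, hva⟩ := hvn
      have := le_bdStep_self G H v a (Or.inr hva)
      have := hBh a ha
      omega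
    obtain ⟨B', cB', hB'⟩ := capped_insert B v hv.2 (by omega)
    apply le_potF
    refine ⟨h + 1, _, 1, B', {v}, rfl, by omega, by omega, by omega, by omega, by simp, ?_, ?_⟩
    · intro a ha
      rcases hB' a ha with rfl | ha
      · omega
      · exact (hBh a ha).trans (le_bdStep G H v a)
    · intro a ha
      rw [Finset.mem_singleton] at ha
      subst ha; omega
  have pt : ∀ v, potF H + (if v ∈ nbhd G A \ (A ∪ B) then g2 else 0) +
      (if v ∈ nbhd G B \ (A ∪ B) then (g1 - g2) else 0) ≤ potF (bdStep G H v) := by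
    intro v
    have hmono := potF_mono H (bdStep G H v) (le_bdStep G H v)
    by_cases hv : v ∈ A ∪ B
    · simp only [Finset.mem_sdiff, hv, not_true, and_false, if_false]; omega
    · simp only [Finset.mem_sdiff, hv, not_false_eq_true, and_true]
      by_cases hb : v ∈ nbhd G B
      · have u1 := up v hv (Or.inr hb)
        have u2 := sh v hv hb
        have : potF H + g1 ≤ potF (bdStep G H v) := by
          rcases hsh with hsh | hsh <;> omega
        split_ifs <;> omega
      · by_cases ha : v ∈ nbhd G A
        · have u1 := up v hv (Or.inl ha)
          simp only [ha, hb, if_true, if_false]; omega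
        · simp only [ha, hb, if_false]; omega
  have hs := Finset.sum_le_sum (fun v (_ : v ∈ Finset.univ) => pt v)
  rw [Finset.sum_add_distrib, Finset.sum_add_distrib] at hs
  simp only [Finset.sum_const, Finset.sum_ite_mem, Finset.univ_inter, smul_eq_mul,
    Finset.card_univ] at hs
  obtain ⟨g, rfl⟩ := Nat.exists_eq_add_of_le hg
  simp only [Nat.add_sub_cancel_left] at *
  nlinarith [Nat.mul_le_mul_left g2 cA, Nat.mul_le_mul_left g cB, Nat.mul_le_mul_right d h78]

/-- Extend a finite driving sequence arbitrarily. -/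
noncomputable def extSeq {V : Type*} [Nonempty V] {n : ℕ} (f : Fin n → V) : ℕ → V :=
  fun k => if h : k < n then f ⟨k, h⟩ else Classical.arbitrary V

/-- Expectation of a functional of the height profile at time `n`. -/
noncomputable def expH {V : Type*} [Fintype V] [Nonempty V] (G : SimpleGraph V) (n : ℕ)
    (Ψ : (V → ℕ) → ℝ) : ℝ :=
  (∑ f : Fin n → V, Ψ (heightProcess G (fun _ => 0) (extSeq f) n)) / (Fintype.card V : ℝ) ^ n

lemma expH_zero {V : Type*} [Fintype V] [Nonempty V] (G : SimpleGraph V)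
    (Ψ : (V → ℕ) → ℝ) : expH G 0 Ψ = Ψ (fun _ => 0) := by
  simp [expH, heightProcess]

lemma expH_succ {V : Type*} [Fintype V] [Nonempty V] (G : SimpleGraph V) (n : ℕ)
    (Ψ : (V → ℕ) → ℝ) : expH G (n + 1) Ψ =
      expH G n (fun H => (∑ v, Ψ (bdStep G H v)) / (Fintype.card V : ℝ)) := by
  unfold expH
  rw [← Finset.sum_div, div_div, ← pow_succ']
  congr 1
  rw [← (Fin.snocEquiv (fun _ : Fin (n + 1) => V)).sum_comp, Fintype.sum_prod_type,
    Finset.sum_comm]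
  refine Finset.sum_congr rfl fun f _ => Finset.sum_congr rfl fun v _ => ?_
  rw [heightProcess_succ]
  have h1 : extSeq ((Fin.snocEquiv (fun _ : Fin (n + 1) => V)) (v, f)) n = v := by
    have : (⟨n, Nat.lt_succ_self n⟩ : Fin (n + 1)) = Fin.last n := rfl
    simp [extSeq, Fin.snocEquiv, this]
  rw [h1]
  congr 2
  apply heightProcess_congr
  intro k hk
  unfold extSeq
  rw [dif_pos (Nat.lt_succ_of_lt hk), dif_pos hk]
  exact Fin.snoc_castSucc (α := fun _ : Fin (n + 1) => V) v f ⟨k, hk⟩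

lemma expH_mono {V : Type*} [Fintype V] [Nonempty V] (G : SimpleGraph V) (n : ℕ)
    (Ψ Θ : (V → ℕ) → ℝ) (h : ∀ H, Ψ H ≤ Θ H) : expH G n Ψ ≤ expH G n Θ := by
  unfold expH
  gcongr
  exact h _

lemma expH_affine {V : Type*} [Fintype V] [Nonempty V] (G : SimpleGraph V) (n : ℕ)
    (Ψ : (V → ℕ) → ℝ) (a b : ℝ) :
    expH G n (fun H => a * Ψ H + b) = a * expH G n Ψ + b := by
  unfold expH
  have : (Fintype.card V : ℝ) ^ n ≠ 0 := by positivity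
  rw [Finset.sum_add_distrib, ← Finset.mul_sum]
  simp only [Finset.sum_const, Finset.card_univ, Fintype.card_pi, Finset.prod_const,
    Fintype.card_fin, nsmul_eq_mul, Nat.cast_pow]
  field_simp

/-- The maximal height as in the definition of the growth rate. -/
noncomputable def maxR {V : Type*} (H : V → ℕ) : ℝ := ⨆ x : V, (H x : ℝ)

lemma le_maxR {V : Type*} [Fintype V] (H : V → ℕ) (x : V) : (H x : ℝ) ≤ maxR H :=
  le_ciSup (f := fun x => (H x : ℝ)) (Set.finite_range _).bddAbove x

lemma exists_maxR {V : Type*} [Fintype V] [Nonempty V] (H : V → ℕ) : ∃ x, maxR H = H x := by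
  obtain ⟨x, hx⟩ := exists_eq_ciSup_of_finite (f := fun x => (H x : ℝ))
  exact ⟨x, hx.symm⟩

lemma height_le {V : Type*} [Fintype V] (G : SimpleGraph V) (X : ℕ → V) (n : ℕ) (x : V) :
    heightProcess G (fun _ => 0) X n x ≤ n := by
  induction n generalizing x with
  | zero => simp [heightProcess]
  | succ n ih =>
    rw [heightProcess_succ, bdStep]
    split_ifs
    · have : (Finset.univ.sup fun y => if y = x ∨ G.Adj x y then
          heightProcess G (fun _ => 0) X n y else 0) ≤ n := by
        apply Finset.sup_le
        intro y _
        split_ifs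
        · exact ih y
        · omega
      omega
    · exact (ih x).trans (by omega)

lemma integral_eq_expH {V : Type} [Fintype V] [Nonempty V] (G : SimpleGraph V) {Ω : Type}
    [MeasurableSpace Ω] (μ : Measure Ω) [IsProbabilityMeasure μ] (X : ℕ → Ω → V)
    (hX : IsUniformIID μ X) (n : ℕ) (Ψ : (V → ℕ) → ℝ) :
    AEStronglyMeasurable (fun ω => Ψ (heightProcess G (fun _ => 0) (fun k => X k ω) n)) μ ∧
    ∫ ω, Ψ (heightProcess G (fun _ => 0) (fun k => X k ω) n) ∂μ = expH G n Ψ := by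
  have hset : ∀ f : Fin n → V, {ω | ∀ i : Fin n, X i ω = f i} =
      {ω | ∀ k < n, X k ω = extSeq f k} := by
    intro f
    ext ω
    simp only [Set.mem_ofPred_eq]
    constructor
    · intro h k hk
      rw [h ⟨k, hk⟩]; simp [extSeq, hk]
    · intro h i
      rw [h i i.2]; simp [extSeq]
  have hms : ∀ f : Fin n → V, MeasurableSet {ω | ∀ i : Fin n, X i ω = f i} := by
    intro f
    rw [Set.ofPred_forall]
    exact MeasurableSet.iInter fun i => hX.1 i (f i)
  have hdec : (fun ω => Ψ (heightProcess G (fun _ => 0) (fun k => X k ω) n)) =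
      fun ω => ∑ f : Fin n → V, Set.indicator {ω | ∀ i : Fin n, X i ω = f i}
        (fun _ => Ψ (heightProcess G (fun _ => 0) (extSeq f) n)) ω := by
    funext ω
    rw [Finset.sum_eq_single (fun i : Fin n => X i ω)]
    · rw [Set.indicator_of_mem (by simp)]
      congr 1
      apply heightProcess_congr
      intro k hk
      simp [extSeq, hk]
    · intro f _ hf
      apply Set.indicator_of_notMem
      intro h
      exact hf (funext fun i => (h i).symm)
    · simp
  have hint : ∀ f : Fin n → V, Integrable (Set.indicator {ω | ∀ i : Fin n, X i ω = f i}
        (fun _ => Ψ (heightProcess G (fun _ => 0) (extSeq f) n))) μ := fun f =>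
    (integrable_const _).indicator (hms f)
  rw [hdec]
  refine ⟨(integrable_finsetSum _ fun f _ => hint f).aestronglyMeasurable, ?_⟩
  rw [integral_finsetSum _ fun f _ => hint f, expH, Finset.sum_div]
  refine Finset.sum_congr rfl fun f _ => ?_
  rw [integral_indicator_const _ (hms f), Measure.real, hset f, hX.2 n]
  simp [div_eq_inv_mul]

lemma exists_iid (V : Type) [Fintype V] [Nonempty V] :
    ∃ (Ω : Type) (_ : MeasurableSpace Ω) (μ : Measure Ω) (_ : IsProbabilityMeasure μ)
      (X : ℕ → Ω → V), IsUniformIID μ X := by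
  let : MeasurableSpace V := ⊤
  let ν : Measure V := (PMF.uniformOfFintype V).toMeasure
  have : IsProbabilityMeasure ν := inferInstance
  refine ⟨ℕ → V, inferInstance, Measure.infinitePi (fun _ => ν), inferInstance,
    fun k ω => ω k, ?_, ?_⟩
  · intro n v
    have h : Measurable (fun ω : ℕ → V => ω n) := measurable_pi_apply n
    have hv : MeasurableSet ({v} : Set V) := MeasurableSpace.measurableSet_top
    exact h hv
  · intro n f
    have : {ω : ℕ → V | ∀ k < n, ω k = f k} =
        Set.pi (↑(Finset.range n)) (fun k => ({f k} : Set V)) := by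
      ext ω; simp [Set.mem_pi]
    rw [this, Measure.infinitePi_pi _ (fun i _ => MeasurableSpace.measurableSet_top)]
    have h1 : ∀ v : V, ν {v} = (Fintype.card V : ℝ≥0∞)⁻¹ := by
      intro v
      simp only [ν]
      rw [PMF.toMeasure_apply_singleton _ _ MeasurableSpace.measurableSet_top,
        PMF.uniformOfFintype_apply]
    simp [h1]

lemma tendsto_expH {V : Type} [Fintype V] [Nonempty V] (G : SimpleGraph V) (γ : ℝ)
    (hγ : IsGrowthRate G γ) :
    Tendsto (fun n : ℕ => (Fintype.card V : ℝ) * expH G n maxR / n) atTop (𝓝 γ) := by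
  obtain ⟨Ω, _, μ, _, X, hX⟩ := exists_iid V
  have h := (hγ.2 μ X hX).1
  have key := tendsto_integral_of_dominated_convergence (μ := μ)
    (F := fun (n : ℕ) ω => (Fintype.card V : ℝ) *
      maxR (heightProcess G (fun _ => 0) (fun k => X k ω) n) / n)
    (f := fun _ => γ) (fun _ => (Fintype.card V : ℝ)) ?_ (integrable_const _) ?_ h
  · have e : ∀ n : ℕ, ∫ ω, (Fintype.card V : ℝ) *
      maxR (heightProcess G (fun _ => 0) (fun k => X k ω) n) / n ∂μ =
        (Fintype.card V : ℝ) * expH G n maxR / n := by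
      intro n
      rw [integral_div, integral_const_mul, (integral_eq_expH G μ X hX n maxR).2]
    simpa [e] using key
  · intro n
    exact (integral_eq_expH G μ X hX n
      (fun H => (Fintype.card V : ℝ) * maxR H / n)).1
  · intro n
    refine Eventually.of_forall fun ω => ?_
    obtain ⟨x, hx⟩ := exists_maxR (heightProcess G (fun _ => 0) (fun k => X k ω) n)
    have h1 := height_le G (fun k => X k ω) n x
    rw [hx, Real.norm_of_nonneg (by positivity)]
    apply div_le_of_le_mul₀ (by positivity) (by positivity)
    gcongr

lemma lower_bound {V : Type} [Fintype V] [Nonempty V] (G : SimpleGraph V) (d : ℕ) (γ : ℝ)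
    (hreg : ∀ a, (Finset.univ.filter (fun v => G.Adj v a)).card = d)
    (hco : ∀ a b, a ≠ b → (Finset.univ.filter (fun v => G.Adj v a ∧ G.Adj v b)).card ≤ 1)
    (hγ : IsGrowthRate G γ) : (78 * d - 7200) / 50 ≤ γ := by
  have hN : (0 : ℝ) < Fintype.card V := by exact_mod_cast Fintype.card_pos
  set N : ℝ := (Fintype.card V : ℝ) with hNdef
  have hE : ∀ n : ℕ, n * ((78 * d - 7200) / N) ≤ expH G n (fun H => (potF H : ℝ)) := by
    intro n
    induction n with
    | zero => rw [expH_zero]; simp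
    | succ n ih =>
      rw [expH_succ]
      have h1 := expH_mono G n (fun H => 1 * (potF H : ℝ) + (78 * d - 7200) / N)
        (fun H => (∑ v, (potF (bdStep G H v) : ℝ)) / N) (by
          intro H
          have := potF_step G d hreg hco H
          have h2 : N * potF H + 78 * d ≤ (∑ v, (potF (bdStep G H v) : ℝ)) + 7200 := by
            rw [hNdef]; exact_mod_cast this
          rw [le_div_iff₀ hN, add_mul, div_mul_cancel₀ _ hN.ne']
          linarith)
      rw [expH_affine] at h1
      push_cast
      linarith
  have hle : ∀ n : ℕ, expH G n (fun H => (potF H : ℝ)) ≤ 50 * expH G n maxR + 126 := by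
    intro n
    rw [← expH_affine]
    apply expH_mono
    intro H
    obtain ⟨x, hx⟩ := exists_maxR H
    have : potF H ≤ 50 * H x + 126 := by
      apply realised_bound H (H x) _ (realised_potF H)
      intro y
      have := le_maxR H y
      rw [hx] at this
      exact_mod_cast this
    rw [hx]
    exact_mod_cast this
  have ht := tendsto_expH G γ hγ
  have h0 : Tendsto (fun n : ℕ => (78 * d - 7200) / 50 - (N * 126 / 50) / (n : ℝ)) atTop
      (𝓝 ((78 * d - 7200) / 50 - 0)) :=
    tendsto_const_nhds.sub (tendsto_const_div_atTop_nhds_zero_nat _)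
  rw [sub_zero] at h0
  refine le_of_tendsto_of_tendsto h0 ht ?_
  filter_upwards [eventually_gt_atTop 0] with n hn
  have hn' : (0 : ℝ) < n := by exact_mod_cast hn
  have h3 := (hE n).trans (hle n)
  rw [le_div_iff₀ hn', sub_mul, div_mul_cancel₀ _ hn'.ne']
  have h4 : N * (n * ((78 * d - 7200) / N)) ≤ N * (50 * expH G n maxR + 126) := by gcongr
  have h5 : N * (n * ((78 * d - 7200) / N)) = n * (78 * d - 7200) := by field_simp
  linarith

lemma upper_bound {V : Type} [Fintype V] [Nonempty V] (G : SimpleGraph V) (d : ℕ) (γ : ℝ)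
    (hreg : ∀ a, (Finset.univ.filter (fun v => G.Adj v a)).card = d)
    (hγ : IsGrowthRate G γ) : γ ≤ Real.exp 1 * (d + 1) := by
  have hN : (0 : ℝ) < Fintype.card V := by exact_mod_cast Fintype.card_pos
  set N : ℝ := (Fintype.card V : ℝ) with hNdef
  let S : (V → ℕ) → ℝ := fun H => ∑ x, Real.exp (H x)
  set c : ℝ := Real.exp 1 * (d + 1) / N with hc
  have hc0 : 0 ≤ c := by positivity
  have hstep : ∀ H, (∑ v, S (bdStep G H v)) / N ≤ (1 + c) * S H + 0 := by
    intro H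
    have hS : ∀ v, S (bdStep G H v) ≤ S H + Real.exp 1 *
        (Real.exp (H v) + ∑ y, if G.Adj v y then Real.exp (H y) else 0) := by
      intro v
      have hv : Real.exp (bdStep G H v v) ≤ Real.exp 1 *
        (Real.exp (H v) + ∑ y, if G.Adj v y then Real.exp (H y) else 0) := by
        obtain ⟨y, -, hy⟩ := Finset.exists_mem_eq_sup Finset.univ ⟨v, Finset.mem_univ v⟩
          (fun y => if y = v ∨ G.Adj v y then H y else 0)
        have e : bdStep G H v v = 1 + (if y = v ∨ G.Adj v y then H y else 0) := by
          simp only [bdStep, if_true]; rw [hy]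
        rw [e]
        push_cast
        rw [Real.exp_add]
        gcongr
        have hnn : ∀ y ∈ Finset.univ, 0 ≤ (if G.Adj v y then Real.exp (H y) else 0) := by
          intro y _; split_ifs <;> positivity
        by_cases h1 : G.Adj v y
        · have := Finset.single_le_sum hnn (Finset.mem_univ y)
          simp only [h1, if_true, or_true] at this ⊢
          have := Real.exp_pos (H v)
          linarith
        · have h2 := Finset.sum_nonneg hnn
          by_cases h3 : y = v
          · subst h3
            simp only [true_or, if_true]
            linarith
          · simp only [h1, h3, or_false, if_false, Nat.cast_zero, Real.exp_zero]
            have : 1 ≤ Real.exp (H v) := Real.one_le_exp (by positivity)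
            linarith
      have : S (bdStep G H v) ≤ S H + Real.exp (bdStep G H v v) := by
        simp only [S]
        rw [← Finset.add_sum_erase _ _ (Finset.mem_univ v),
          ← Finset.add_sum_erase _ (fun x => Real.exp (H x)) (Finset.mem_univ v)]
        have : ∑ x ∈ Finset.univ.erase v, Real.exp (bdStep G H v x) =
            ∑ x ∈ Finset.univ.erase v, Real.exp (H x) := by
          refine Finset.sum_congr rfl fun x hx => ?_
          simp [bdStep, Finset.ne_of_mem_erase hx]
        rw [this]
        have := Real.exp_pos (H v)
        linarith
      linarith
    have hsum := Finset.sum_le_sum (fun v (_ : v ∈ Finset.univ) => hS v)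
    rw [Finset.sum_add_distrib, ← Finset.mul_sum, Finset.sum_add_distrib,
      Finset.sum_comm (f := fun v y => if G.Adj v y then Real.exp (H y) else 0)] at hsum
    have hd : ∀ y, (∑ v, if G.Adj v y then Real.exp (H y) else 0) = d * Real.exp (H y) := by
      intro y
      rw [← Finset.sum_filter, Finset.sum_const, hreg y, nsmul_eq_mul]
    simp only [hd, ← Finset.mul_sum, Finset.sum_const, Finset.card_univ, nsmul_eq_mul] at hsum
    rw [div_le_iff₀ hN]
    have : ((1 + c) * S H + 0) * N = N * S H + Real.exp 1 * (S H + d * S H) := by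
      rw [hc]; field_simp; ring
    rw [this]
    exact hsum
  have hE : ∀ n : ℕ, expH G n S ≤ N * Real.exp (n * c) := by
    intro n
    induction n with
    | zero => rw [expH_zero]; simp [S, hNdef]
    | succ n ih =>
      rw [expH_succ]
      refine (expH_mono G n _ _ hstep).trans ?_
      rw [expH_affine]
      have h1 : 1 + c ≤ Real.exp c := by linarith [Real.add_one_le_exp c]
      have h2 : N * Real.exp ((n + 1 : ℕ) * c) = Real.exp c * (N * Real.exp (n * c)) := by
        push_cast; rw [add_mul, one_mul, Real.exp_add]; ring
      rw [h2, add_zero]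
      calc (1 + c) * expH G n S ≤ (1 + c) * (N * Real.exp (n * c)) := by gcongr
        _ ≤ _ := by gcongr
  have hmax : ∀ n : ℕ, expH G n maxR ≤ Real.log N + n * c := by
    intro n
    set a : ℝ := N * Real.exp (n * c) with ha
    have ha0 : 0 < a := by positivity
    have hl : Real.log a = Real.log N + n * c := by
      rw [ha, Real.log_mul hN.ne' (Real.exp_pos _).ne', Real.log_exp]
    have h1 := expH_mono G n maxR (fun H => a⁻¹ * S H + (Real.log a - 1)) (by
      intro H
      obtain ⟨x, hx⟩ := exists_maxR H
      have h2 := Real.add_one_le_exp (maxR H - Real.log a)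
      rw [Real.exp_sub, Real.exp_log ha0] at h2
      have h3 : Real.exp (maxR H) ≤ S H := by
        rw [hx]
        exact Finset.single_le_sum (f := fun x => Real.exp (H x))
          (fun _ _ => (Real.exp_pos _).le) (Finset.mem_univ x)
      have h4 : Real.exp (maxR H) / a ≤ a⁻¹ * S H := by
        rw [div_eq_inv_mul]; gcongr
      linarith)
    rw [expH_affine] at h1
    have h5 : a⁻¹ * expH G n S ≤ 1 := by
      rw [inv_mul_le_iff₀ ha0, mul_one]; exact hE n
    linarith
  have ht := tendsto_expH G γ hγ
  have h0 : Tendsto (fun n : ℕ => Real.exp 1 * (d + 1) + (N * Real.log N) / (n : ℝ)) atTop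
      (𝓝 (Real.exp 1 * (d + 1) + 0)) :=
    tendsto_const_nhds.add (tendsto_const_div_atTop_nhds_zero_nat _)
  rw [add_zero] at h0
  refine le_of_tendsto_of_tendsto ht h0 ?_
  filter_upwards [eventually_gt_atTop 0] with n hn
  have hn' : (0 : ℝ) < n := by exact_mod_cast hn
  rw [div_le_iff₀ hn', add_mul, div_mul_cancel₀ _ hn'.ne']
  have h4 : N * expH G n maxR ≤ N * (Real.log N + n * c) := by gcongr; exact hmax n
  have h5 : N * (Real.log N + n * c) = N * Real.log N + n * (Real.exp 1 * (d + 1)) := by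
    rw [hc]; field_simp
  linarith

lemma codegree {V : Type} [Fintype V] (G : SimpleGraph V) (hg : 5 ≤ G.egirth) (a b : V)
    (hab : a ≠ b) : (Finset.univ.filter (fun v => G.Adj v a ∧ G.Adj v b)).card ≤ 1 := by
  rw [Finset.card_le_one]
  intro u hu v hv
  simp only [Finset.mem_filter, Finset.mem_univ, true_and] at hu hv
  by_contra huv
  let w : G.Walk a a := .cons hu.1.symm (.cons hu.2 (.cons hv.2.symm (.cons hv.1 .nil)))
  have hw : w.IsCycle := by
    have := hu.1.ne; have := hu.2.ne; have := hv.1.ne; have := hv.2.ne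
    rw [SimpleGraph.Walk.isCycle_def]
    simp only [w, SimpleGraph.Walk.isTrail_def]
    simp
    grind
  have := SimpleGraph.le_egirth.mp hg a w hw
  simp only [w, SimpleGraph.Walk.length_cons, SimpleGraph.Walk.length_nil] at this
  norm_cast at this

theorem stmt16 (V : ℕ → Type) [∀ k, Fintype (V k)]
    (G : ∀ k, SimpleGraph (V k)) (d : ℕ → ℕ) (γ : ℕ → ℝ)
    (hconn : ∀ k, (G k).Connected)
    (hreg : ∀ k, (G k).IsRegularOfDegree (d k))
    (hgirth : ∀ k, 5 ≤ (G k).egirth)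
    (hd : Tendsto d atTop atTop)
    (hγ : ∀ k, IsGrowthRate (G k) (γ k)) :
    (2 * Real.exp 1 - 1) / (Real.exp 1 - 1) ^ 2 ≤
      Filter.atTop.liminf (fun k => γ k / d k) := by
  have hcard : ∀ k a, (Finset.univ.filter (fun v => (G k).Adj v a)).card = d k := by
    intro k a
    rw [← hreg k a, ← SimpleGraph.card_neighborFinset_eq_degree]
    congr 1
    ext v
    simp [SimpleGraph.adj_comm]
  have hlow : ∀ k, (78 * (d k : ℝ) - 7200) / 50 ≤ γ k := by
    intro k
    have := (hconn k).nonempty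
    exact lower_bound (G k) (d k) (γ k) (hcard k) (codegree (G k) (hgirth k)) (hγ k)
  have hupp : ∀ k, γ k ≤ Real.exp 1 * (d k + 1) := by
    intro k
    have := (hconn k).nonempty
    exact upper_bound (G k) (d k) (γ k) (hcard k) (hγ k)
  have hconst : (2 * Real.exp 1 - 1) / (Real.exp 1 - 1) ^ 2 ≤ 1.51 := by
    have h1 := Real.exp_one_gt_d9
    rw [div_le_iff₀ (by nlinarith)]
    nlinarith
  apply le_liminf_of_le
  · apply isCoboundedUnder_ge_of_eventually_le atTop (x := Real.exp 1 * 2)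
    filter_upwards [hd.eventually_ge_atTop 1] with k hk
    have hk' : (1 : ℝ) ≤ d k := by exact_mod_cast hk
    rw [div_le_iff₀ (by linarith)]
    have := hupp k
    have := Real.exp_pos 1
    nlinarith
  · filter_upwards [hd.eventually_ge_atTop 3000] with k hk
    have hk' : (3000 : ℝ) ≤ d k := by exact_mod_cast hk
    refine hconst.trans ?_
    rw [le_div_iff₀ (by linarith)]
    have := hlow k
    linarith
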